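/- Let k ≥ 3 be odd and let G ∈ 𝒪(k) have unique cycle vertices u=u_0,u_1,…,u_{k−1} with deg(u)=4 and deg(u_i)=2 for i ≥ 1, and let v_1 and w_1 be the two neighbors of u off the cycle. If G is periodic, then deg(v_1) = deg(w_1) and this common degree is 1 or 2. -/

import Mathlib

open Matrix

attribute [local instance] Classical.propDecidable

namespace GroverPaper

variable {V : Type*}

/-- The arc set of a simple graph: ordered pairs of adjacent vertices. -/
abbrev Arc (G : SimpleGraph V) : Type _ := {p : V × V // G.Adj p.1 p.2}

/-- The time evolution matrix of the Grover walk on a graph `G`. -/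
noncomputable def groverU [Fintype V] (G : SimpleGraph V) :
    Matrix (Arc G) (Arc G) ℂ := fun e f =>
  if f.val.2 = e.val.1 then
    if e.val = (f.val.2, f.val.1) then 2 / (G.degree f.val.2 : ℂ) - 1
    else 2 / (G.degree f.val.2 : ℂ)
  else 0

/-- A graph is periodic if some positive power of its Grover evolution is the identity. -/
def IsPeriodic [Fintype V] (G : SimpleGraph V) : Prop :=
  ∃ k : ℕ, 0 < k ∧ groverU G ^ k = 1

/-- The period of a periodic graph: the least positive `k` with `U^k = 1`. -/
noncomputable def period [Fintype V] (G : SimpleGraph V) : ℕ :=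
  sInf {k : ℕ | 0 < k ∧ groverU G ^ k = 1}

/-- A graph is `k`-periodic if it is periodic with period `k`. -/
def IsKPeriodic [Fintype V] (G : SimpleGraph V) (k : ℕ) : Prop :=
  IsPeriodic G ∧ period G = k

/-- A graph is odd-periodic if it is periodic with odd period. -/
def IsOddPeriodic [Fintype V] (G : SimpleGraph V) : Prop :=
  IsPeriodic G ∧ Odd (period G)

/-- The transition matrix of the isotropic random walk on `G`. -/
noncomputable def transition [Fintype V] (G : SimpleGraph V) :
    Matrix V V ℝ := fun u v =>
  if G.Adj u v then 1 / (G.degree u : ℝ) else 0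

/-!
Let `T` be the transition matrix of `G`. If `G` is periodic, every eigenvalue of `2T` has the form
`ζ + ζ⁻¹` with `ζ` a root of unity, so the characteristic polynomial `χ` of `2T` has algebraic
integer coefficients. Removing the edge of the cycle between `c 0` and `c (-1)` leaves a tree, and
conjugating by the signs of its bipartition turns `-2T` into `2T` with the two entries of that edge
negated, because these signs agree at both ends of the edge when the cycle is odd. Expanding the
determinant along the cycle therefore gives `charpoly (-2T) - χ = 2ψ`, where `ψ` is the
characteristic polynomial of the block of `2T` off the cycle. On coefficients, the left hand side is
`0` or `-2` times that of `χ`, so `ψ` has algebraic integer coefficients as well. Comparing the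
second coefficients of `χ` and `ψ`, that is, the traces of the squares, leaves the contributions of
the cycle and of its two outer edges, so `1 / deg v + 1 / deg w` is an algebraic integer. It is
rational, hence an integer.
-/

open Polynomial

section Determinant

variable {R : Type*} [CommRing R] [Fintype V] [DecidableEq V]

lemma det_updateRow_add_smul (M : Matrix V V R) (i : V) (x : R) (r : V → R) :
    (M.updateRow i (M i + x • r)).det = M.det + x * (M.updateRow i r).det := by
  rw [det_updateRow_add, det_updateRow_smul, updateRow_eq_self]

lemma det_add_single_sub_det_sub_single (M : Matrix V V R) {i j : V} (hij : i ≠ j) (a b : R) :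
    (M + (single i j a + single j i b)).det - (M - (single i j a + single j i b)).det =
      2 * (a * M.adjugate j i + b * M.adjugate i j) := by
  have hexpand (x y : R) : (M + (single i j x + single j i y)).det =
      M.det + x * M.adjugate j i + y * M.adjugate i j +
        x * y * ((M.updateRow j (Pi.single i 1)).updateRow i (Pi.single j 1)).det := by
    set A := M.updateRow i (M i + x • Pi.single j 1) with hA
    have hAj : A j = M j := updateRow_ne hij.symm
    have hM : M + (single i j x + single j i y) = A.updateRow j (A j + y • Pi.single i 1) := by
      ext r s
      rcases eq_or_ne r j with rfl | hrj
      · simp [hAj, single_apply, Pi.single_apply, hij, eq_comm]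
      · rcases eq_or_ne r i with rfl | hri
        · simp [hA, hij, single_apply, Pi.single_apply, hrj.symm, eq_comm]
        · simp [hA, hri, hrj, hri.symm, hrj.symm]
    have hAi : (M.updateRow j (Pi.single i 1)) i = M i := updateRow_ne hij
    rw [hM, det_updateRow_add_smul, hA, det_updateRow_add_smul, updateRow_comm _ hij, ← hAi,
      det_updateRow_add_smul, adjugate_apply, adjugate_apply]
    ring
  have hneg : M - (single i j a + single j i b) = M + (single i j (-a) + single j i (-b)) := by
    simp only [sub_eq_add_neg, neg_add, single_neg]
  rw [hneg, hexpand, hexpand]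
  ring

lemma adjugate_last_zero_of_upperHessenberg {n : ℕ} (A : Matrix (Fin (n + 1)) (Fin (n + 1)) R)
    (hA : ∀ (i : Fin n) (j : Fin (n + 1)), j < i.castSucc → A i.succ j = 0) :
    A.adjugate (Fin.last n) 0 = (-1) ^ n * ∏ i : Fin n, A i.succ i.castSucc := by
  have htri : (A.submatrix Fin.succ Fin.castSucc).IsUpperTriangular :=
    fun i j hij => hA i j.castSucc (Fin.castSucc_lt_castSucc_iff.2 hij)
  rw [adjugate_fin_succ_eq_det_submatrix, Fin.succAbove_last, Fin.succAbove_zero,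
    det_of_isUpperTriangular htri]
  simp

lemma adjugate_path_ends {n : ℕ} (M : Matrix V V R) {p : Fin (n + 1) → V}
    (hp : Function.Injective p)
    (hM : ∀ (i : Fin n) (x : V), M (p i.succ) x ≠ 0 → ∃ j ≥ i.castSucc, x = p j) :
    M.adjugate (p (Fin.last n)) (p 0) =
      (-1) ^ n * (∏ i : Fin n, M (p i.succ) (p i.castSucc)) *
        (M.toSquareBlockProp (· ∉ Set.range p)).det := by
  set N := M.updateRow (p 0) (Pi.single (p (Fin.last n)) 1) with hN
  have hNrow (i : Fin n) : N (p i.succ) = M (p i.succ) := updateRow_ne (hp.ne i.succ_ne_zero)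
  have hpath : (N.submatrix p p).det = (-1) ^ n * ∏ i : Fin n, M (p i.succ) (p i.castSucc) := by
    have hNp : N.submatrix p p = (M.submatrix p p).updateRow 0 (Pi.single (Fin.last n) 1) := by
      ext i j
      simp [hN, updateRow_apply, hp.eq_iff, Pi.single_apply]
    rw [hNp, ← adjugate_apply, adjugate_last_zero_of_upperHessenberg]
    · rfl
    · intro i j hij
      by_contra hne
      obtain ⟨l, hl, hjl⟩ := hM i (p j) hne
      exact (hij.trans_le hl).ne (hp hjl)
  have hoff : N.toSquareBlockProp (· ∉ Set.range p) = M.toSquareBlockProp (· ∉ Set.range p) := by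
    ext x y
    have hx : x.1 ≠ p 0 := fun h => x.2 ⟨_, h.symm⟩
    simp [toSquareBlockProp_def, hN, hx]
  have htri (x : V) (hx : x ∈ Set.range p) (y : V) (hy : y ∉ Set.range p) : N x y = 0 := by
    obtain ⟨i, rfl⟩ := hx
    cases i using Fin.cases with
    | zero => simp [hN, show y ≠ p (Fin.last n) from fun h => hy ⟨_, h.symm⟩]
    | succ i =>
      by_contra hne
      obtain ⟨j, -, rfl⟩ := hM i y (hNrow i ▸ hne)
      exact hy ⟨j, rfl⟩
  rw [adjugate_apply, ← hpath, ← hoff]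
  convert twoBlockTriangular_det' N (· ∈ Set.range p) htri using 2
  convert det_submatrix_equiv_self (Equiv.ofInjective p hp) (N.toSquareBlockProp (· ∈ Set.range p))
  rfl

end Determinant

section Charpoly

variable {R : Type*} [CommRing R] [Fintype V] [DecidableEq V]

lemma charmatrix_toSquareBlockProp (M : Matrix V V R) (q : V → Prop) :
    M.charmatrix.toSquareBlockProp q = (M.toSquareBlockProp q).charmatrix := by
  ext x y
  simp [charmatrix_apply, diagonal_apply, toSquareBlockProp_def, Subtype.ext_iff]

lemma adjugate_charmatrix_path_ends {n : ℕ} (M : Matrix V V R) {p : Fin (n + 1) → V}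
    (hp : Function.Injective p)
    (hM : ∀ (i : Fin n) (x : V), M (p i.succ) x ≠ 0 → ∃ j ≥ i.castSucc, x = p j) :
    M.charmatrix.adjugate (p (Fin.last n)) (p 0) =
      C (∏ i : Fin n, M (p i.succ) (p i.castSucc)) *
        (M.toSquareBlockProp (· ∉ Set.range p)).charpoly := by
  have hpath (i : Fin n) (x : V) (hx : M.charmatrix (p i.succ) x ≠ 0) :
      ∃ j ≥ i.castSucc, x = p j := by
    rcases eq_or_ne x (p i.succ) with rfl | hne
    · exact ⟨_, i.castSucc_lt_succ.le, rfl⟩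
    · exact hM i x (by simpa [charmatrix_apply_ne _ _ _ hne.symm] using hx)
  rw [adjugate_path_ends _ hp hpath, charmatrix_toSquareBlockProp, charpoly]
  simp only [charmatrix_apply_ne _ _ _ (hp.ne (Fin.castSucc_lt_succ).ne'), Finset.prod_neg,
    Finset.card_univ, Fintype.card_fin, ← mul_assoc, ← mul_pow, neg_one_mul, neg_neg, one_pow,
    one_mul, map_prod]
  congr!

lemma adjugate_charmatrix_path_ends' {n : ℕ} (M : Matrix V V R) {p : Fin (n + 1) → V}
    (hp : Function.Injective p)
    (hM : ∀ (i : Fin n) (x : V), M x (p i.succ) ≠ 0 → ∃ j ≥ i.castSucc, x = p j) :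
    M.charmatrix.adjugate (p 0) (p (Fin.last n)) =
      C (∏ i : Fin n, M (p i.castSucc) (p i.succ)) *
        (M.toSquareBlockProp (· ∉ Set.range p)).charpoly := by
  have h := adjugate_charmatrix_path_ends Mᵀ hp hM
  rw [charmatrix_transpose, ← adjugate_transpose, transpose_apply] at h
  rw [h, ← charpoly_transpose (M.toSquareBlockProp _)]
  rfl

lemma charpoly_sub_sub_charpoly_add {n : ℕ} [NeZero n] (M : Matrix V V R)
    {p : Fin (n + 1) → V} (hp : Function.Injective p)
    (hrow : ∀ (i : Fin n) (x : V), M (p i.succ) x ≠ 0 → ∃ j ≥ i.castSucc, x = p j)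
    (hcol : ∀ (i : Fin n) (x : V), M x (p i.succ) ≠ 0 → ∃ j ≥ i.castSucc, x = p j)
    {E : Matrix V V R} {a b : R}
    (hE : E = single (p 0) (p (Fin.last n)) a + single (p (Fin.last n)) (p 0) b) :
    (M - E).charpoly - (M + E).charpoly =
      C (2 * (a * ∏ i : Fin n, M (p i.succ) (p i.castSucc) +
        b * ∏ i : Fin n, M (p i.castSucc) (p i.succ))) *
        (M.toSquareBlockProp (· ∉ Set.range p)).charpoly := by
  have hends : p 0 ≠ p (Fin.last n) := hp.ne (Fin.last_pos' (n := n)).ne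
  have hmap : E.map (C : R → R[X]) =
      single (p 0) (p (Fin.last n)) (C a) + single (p (Fin.last n)) (p 0) (C b) := by
    rw [hE, Matrix.map_add _ (fun _ _ => C_add)]
    simp
  have hadd : (M + E).charmatrix = M.charmatrix - E.map C := by
    simp [charmatrix, Matrix.map_add, sub_add_eq_sub_sub]
  have hsub : (M - E).charmatrix = M.charmatrix + E.map C := by
    simp [charmatrix, Matrix.map_sub, sub_sub_eq_add_sub, sub_add_eq_add_sub]
  rw [charpoly, charpoly, hadd, hsub, hmap, det_add_single_sub_det_sub_single _ hends,
    adjugate_charmatrix_path_ends M hp hrow, adjugate_charmatrix_path_ends' M hp hcol]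
  simp only [C_mul, C_add, map_ofNat]
  ring

end Charpoly

section Coefficients

variable {R : Type*} [CommRing R] [Fintype V] [DecidableEq V]

lemma charpoly_neg_coeff (M : Matrix V V R) (i : ℕ) :
    (-M).charpoly.coeff i = (-1) ^ (Fintype.card V + i) * M.charpoly.coeff i := by
  have hmatrix : (-M).charmatrix = -(M.charmatrix.map (compRingHom (-X))) := by
    ext1 r s
    by_cases h : r = s <;> simp [h, add_comm]
  have hcharpoly : (-M).charpoly = C ((-1) ^ Fintype.card V) * M.charpoly.comp (C (-1) * X) := by
    rw [charpoly, hmatrix, det_neg, ← RingHom.mapMatrix_apply, ← RingHom.map_det, charpoly]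
    simp
  rw [hcharpoly, coeff_C_mul, comp_C_mul_X_coeff, pow_add]
  ring

lemma charpoly_diagonal_conj {s : V → R} (hs : ∀ v, s v * s v = 1) (M : Matrix V V R) :
    (diagonal s * M * diagonal s).charpoly = M.charpoly := by
  have hD : diagonal s * diagonal s = 1 := by simp [hs]
  rw [charpoly_mul_comm, ← mul_assoc, hD, one_mul]

lemma charpolyRev_mul_charpolyRev_neg (M : Matrix V V R) :
    M.charpolyRev * (-M).charpolyRev = expand R 2 (M * M).charpolyRev := by
  have hfactor : (1 - (X : R[X]) • M.map C) * (1 - (X : R[X]) • (-M).map C) =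
      (1 - (X : R[X]) • (M * M).map C).map (expand R 2) := by
    have hneg : (-M).map (C : R → R[X]) = -M.map C := by ext1 r s; simp
    have hexpand : (1 - (X : R[X]) • (M * M).map C).map (expand R 2) =
        1 - (X ^ 2 : R[X]) • (M * M).map C := by
      ext1 r s
      by_cases h : r = s <;> simp [h, -Matrix.map_mul]
    rw [hexpand, hneg, Matrix.map_mul]
    simp only [mul_sub, sub_mul, smul_neg, mul_one, one_mul, Matrix.smul_mul, Matrix.mul_smul,
      mul_neg, smul_smul, pow_two]
    abel
  rw [charpolyRev, charpolyRev, charpolyRev, ← det_mul, hfactor, AlgHom.map_det,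
    AlgHom.mapMatrix_apply]

lemma two_mul_charpoly_coeff_card_sub_two (M : Matrix V V R) (hV : 2 ≤ Fintype.card V) :
    2 * M.charpoly.coeff (Fintype.card V - 2) = M.trace ^ 2 - (M * M).trace := by
  nontriviality R
  have hcoeff (N : Matrix V V R) :
      N.charpolyRev.coeff 2 = N.charpoly.coeff (Fintype.card V - 2) := by
    rw [← reverse_charpoly, coeff_reverse, charpoly_natDegree_eq_dim, revAt_le hV]
  have hneg : (-M).charpoly.coeff (Fintype.card V - 2) =
      M.charpoly.coeff (Fintype.card V - 2) := by
    have : Even (Fintype.card V + (Fintype.card V - 2)) := ⟨Fintype.card V - 1, by omega⟩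
    rw [charpoly_neg_coeff, this.neg_one_pow, one_mul]
  have h := congr_arg (coeff · 2) (charpolyRev_mul_charpolyRev_neg M)
  simp only [coeff_mul, Finset.Nat.sum_antidiagonal_eq_sum_range_succ_mk, Finset.sum_range_succ,
    Finset.sum_range_zero] at h
  rw [coeff_expand two_pos] at h
  simp only [coeff_zero_eq_eval_zero, eval_charpolyRev, tsub_zero, hcoeff, hneg, one_mul, zero_add,
    coeff_charpolyRev_eq_neg_trace, Nat.add_one_sub_one, trace_neg, neg_neg, neg_mul, tsub_self,
    mul_one, dvd_refl, ↓reduceIte, Nat.div_self two_pos] at h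
  linear_combination h

lemma isIntegral_charpoly_coeff {K : Type*} [Field K] [IsAlgClosed K] (M : Matrix V V K)
    (hM : ∀ μ ∈ spectrum K M, IsIntegral ℤ μ) (i : ℕ) : IsIntegral ℤ (M.charpoly.coeff i) := by
  refine isIntegral_coeff_of_factors _ ?_ (IsAlgClosed.splits _) ?_ i
  · rw [M.charpoly_monic.leadingCoeff]
    exact isIntegral_one
  · exact fun μ hμ => hM μ (Matrix.mem_spectrum_iff_isRoot_charpoly.2 hμ)

end Coefficients

lemma trace_mul_self_eq_add_of_injective {R ι : Type*} [CommRing R] [Fintype V] [Fintype ι]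
    (M : Matrix V V R) {c : ι → V} (hc : Function.Injective c) :
    (M * M).trace = (M.toSquareBlockProp (· ∉ Set.range c) *
        M.toSquareBlockProp (· ∉ Set.range c)).trace +
      ∑ i, ∑ j, M (c i) (c j) * M (c j) (c i) +
      2 * ∑ i, ∑ y : {y // y ∉ Set.range c}, M (c i) y * M y (c i) := by
  let e : ι ⊕ {y // y ∉ Set.range c} ≃ V :=
    ((Equiv.ofInjective c hc).sumCongr (Equiv.refl _)).trans (Equiv.sumCompl (· ∈ Set.range c))
  have hinl (i : ι) : e (Sum.inl i) = c i := rfl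
  have hinr (y : {y // y ∉ Set.range c}) : e (Sum.inr y) = y := rfl
  simp only [trace, diag_apply, mul_apply, ← e.sum_comp, Fintype.sum_sum_type, hinl, hinr,
    toSquareBlockProp_def, of_apply, Finset.sum_add_distrib]
  rw [Finset.sum_comm (s := (Finset.univ : Finset {y // y ∉ Set.range c}))]
  simp only [mul_comm (M (Subtype.val _) (c _))]
  ring

section Spectrum

lemma mem_spectrum_iff_exists_mulVec_eq_smul {K : Type*} [Field K] [Fintype V] [DecidableEq V]
    (M : Matrix V V K) (μ : K) : μ ∈ spectrum K M ↔ ∃ f, f ≠ 0 ∧ M *ᵥ f = μ • f := by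
  rw [← spectrum_toLin', ← Module.End.hasEigenvalue_iff_mem_spectrum]
  constructor
  · intro h
    obtain ⟨f, hf⟩ := h.exists_hasEigenvector
    exact ⟨f, hf.2, hf.apply_eq_smul⟩
  · rintro ⟨f, hf, hMf⟩
    exact Module.End.hasEigenvalue_of_hasEigenvector
      (Module.End.hasEigenvector_iff.2 ⟨Module.End.mem_eigenspace_iff.2 hMf, hf⟩)

lemma isIntegral_of_mem_spectrum {R K A : Type*} [CommRing R] [Field K] [Ring A] [Algebra R K]
    [Algebra K A] [Algebra R A] [IsScalarTower R K A] {a : A} (ha : IsIntegral R a) {μ : K}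
    (hμ : μ ∈ spectrum K a) : IsIntegral R μ := by
  obtain ⟨q, hq, hqa⟩ := ha
  have hmem : eval μ (q.map (algebraMap R K)) ∈ spectrum K (aeval a (q.map (algebraMap R K))) :=
    spectrum.subset_polynomial_aeval _ _ ⟨μ, hμ, rfl⟩
  rw [aeval_map_algebraMap, aeval_def, hqa] at hmem
  have : Nontrivial A := not_subsingleton_iff_nontrivial.1 fun _ => by
    simp [spectrum.of_subsingleton] at hμ
  rw [spectrum.zero_eq, Set.mem_singleton_iff, eval_map] at hmem
  exact ⟨q, hq, hmem⟩

end Spectrum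

section Grover

variable [Fintype V] (G : SimpleGraph V)

/-- Twice the transition matrix `T` of the isotropic random walk, over `ℂ`. An eigenvalue `μ` of
`2T` corresponds to the eigenvalues `ζ`, `ζ⁻¹` of the Grover walk with `μ = ζ + ζ⁻¹`. -/
noncomputable def doubledTransition : Matrix V V ℂ :=
  (2 : ℂ) • (transition G).map (↑)

lemma doubledTransition_apply (v w : V) :
    doubledTransition G v w = if G.Adj v w then 2 / (G.degree v : ℂ) else 0 := by
  by_cases h : G.Adj v w <;> simp [doubledTransition, transition, h, div_eq_mul_inv]

lemma doubledTransition_mulVec (f : V → ℂ) (v : V) :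
    (doubledTransition G *ᵥ f) v = 2 / (G.degree v : ℂ) * ∑ w ∈ G.neighborFinset v, f w := by
  simp [mulVec, dotProduct, doubledTransition_apply, Finset.mul_sum, Finset.sum_filter,
    SimpleGraph.neighborFinset_eq_filter]

lemma groverU_mulVec (φ : V × V → ℂ) (e : Arc G) :
    (groverU G *ᵥ fun g => φ g.val) e =
      2 / (G.degree e.val.1 : ℂ) * ∑ w ∈ G.neighborFinset e.val.1, φ (w, e.val.1) -
        φ e.val.swap := by
  obtain ⟨⟨v, w⟩, hvw⟩ := e
  have hentry (g : Arc G) : groverU G ⟨(v, w), hvw⟩ g * φ g.val =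
      (if g.val.2 = v then 2 / (G.degree v : ℂ) * φ g.val else 0) -
        (if g = ⟨(w, v), hvw.symm⟩ then φ (w, v) else 0) := by
    obtain ⟨⟨x, y⟩, hxy⟩ := g
    by_cases hy : y = v
    · subst hy
      by_cases hx : x = w
      · subst hx
        simp only [groverU, ↓reduceIte]
        ring
      · simp [groverU, hx, Ne.symm hx]
    · simp [groverU, hy]
  have hinto : ∑ g : Arc G, (if g.val.2 = v then 2 / (G.degree v : ℂ) * φ g.val else 0) =
      2 / (G.degree v : ℂ) * ∑ x ∈ G.neighborFinset v, φ (x, v) := by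
    rw [← Finset.sum_filter, Finset.mul_sum]
    symm
    refine Finset.sum_bij (fun x hx => ⟨(x, v), ((G.mem_neighborFinset v x).1 hx).symm⟩)
      (by simp) (by simp) ?_ (by simp)
    · rintro ⟨⟨x, y⟩, hxy⟩ hy
      obtain rfl : y = v := by simpa using hy
      exact ⟨x, by simpa using hxy.symm, rfl⟩
  simp only [mulVec, dotProduct, hentry, Finset.sum_sub_distrib, hinto, Finset.sum_ite_eq',
    Finset.mem_univ, if_true, Prod.swap_prod_mk]

variable {G}

lemma groverU_mulVec_terminus (f : V → ℂ) :
    (groverU G *ᵥ fun e => f e.val.2) = fun e => f e.val.1 := by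
  ext e
  have hdeg : (G.degree e.val.1 : ℂ) ≠ 0 :=
    Nat.cast_ne_zero.2 ((G.degree_pos_iff_exists_adj _).2 ⟨_, e.property⟩).ne'
  rw [groverU_mulVec G (fun a => f a.2)]
  simp only [Finset.sum_const, SimpleGraph.card_neighborFinset_eq_degree, nsmul_eq_mul,
    Prod.snd_swap]
  field_simp
  ring

lemma groverU_mulVec_origin {f : V → ℂ} {μ : ℂ} (hf : doubledTransition G *ᵥ f = μ • f) :
    (groverU G *ᵥ fun e => f e.val.1) = μ • (fun e => f e.val.1) - fun e => f e.val.2 := by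
  ext e
  rw [groverU_mulVec G (fun a => f a.1), ← doubledTransition_mulVec, hf]
  rfl

lemma isIntegral_of_mem_spectrum_doubledTransition (hG : IsPeriodic G) {μ : ℂ}
    (hμ : μ ∈ spectrum ℂ (doubledTransition G)) : IsIntegral ℤ μ := by
  obtain ⟨N, hN, hU⟩ := hG
  obtain ⟨f, hf, hTf⟩ := (mem_spectrum_iff_exists_mulVec_eq_smul _ _).1 hμ
  rcases eq_or_ne μ 0 with rfl | hμ0
  · exact isIntegral_zero
  have horigin : (fun e : Arc G => f e.val.1) ≠ 0 := by
    intro hzero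
    refine hf (funext fun v => ?_)
    by_cases hv : ∃ w, G.Adj v w
    · obtain ⟨w, hvw⟩ := hv
      exact congr_fun hzero ⟨(v, w), hvw⟩
    · have : (doubledTransition G *ᵥ f) v = 0 := by
        push Not at hv
        simp [mulVec, dotProduct, doubledTransition_apply, hv]
      rw [hTf] at this
      simpa [hμ0] using this
  have hUint : IsIntegral ℤ (groverU G) := .of_pow hN (hU ▸ isIntegral_one)
  have hsum : IsIntegral ℤ (groverU G + groverU G ^ (N - 1)) :=
    have hmem := Algebra.self_mem_adjoin_singleton ℤ (groverU G)
    .of_mem_of_fg _ hUint.fg_adjoin_singleton _ (add_mem hmem (pow_mem hmem _))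
  refine isIntegral_of_mem_spectrum hsum
    ((mem_spectrum_iff_exists_mulVec_eq_smul _ _).2 ⟨_, horigin, ?_⟩)
  have hinv : groverU G ^ (N - 1) *ᵥ (fun e => f e.val.1) = fun e => f e.val.2 := by
    rw [← groverU_mulVec_terminus, mulVec_mulVec, ← pow_succ, Nat.sub_add_cancel hN, hU,
      one_mulVec]
  rw [add_mulVec, groverU_mulVec_origin hTf, hinv, sub_add_cancel]

end Grover

section EdgePart

variable {R : Type*} [Ring R] [DecidableEq V] (M : Matrix V V R) {a b x y : V}

/-- The matrix that agrees with `M` at the positions `(a, b)` and `(b, a)` and vanishes elsewhere,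
for `a ≠ b`: the contribution of the edge `s(a, b)` to a matrix indexed by vertices. -/
def edgePart (M : Matrix V V R) (a b : V) : Matrix V V R :=
  single a b (M a b) + single b a (M b a)

lemma mk_eq_mk_of_edgePart_ne_zero (hxy : edgePart M a b x y ≠ 0) : s(x, y) = s(a, b) := by
  contrapose! hxy
  rw [Ne, Sym2.eq_iff, not_or] at hxy
  rw [edgePart, Matrix.add_apply, single_apply_of_ne, single_apply_of_ne, add_zero]
  · tauto
  · tauto

lemma sub_edgePart_apply (hab : a ≠ b) :
    (M - edgePart M a b) x y = if s(x, y) = s(a, b) then 0 else M x y := by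
  split_ifs with hxy
  · rcases Sym2.eq_iff.1 hxy with ⟨rfl, rfl⟩ | ⟨rfl, rfl⟩ <;> simp [edgePart, hab, hab.symm]
  · have hzero : edgePart M a b x y = 0 := not_not.1 (mt (mk_eq_mk_of_edgePart_ne_zero M) hxy)
    rw [Matrix.sub_apply, hzero, sub_zero]

lemma toSquareBlockProp_sub_edgePart (q : V → Prop) (ha : ¬q a) :
    (M - edgePart M a b).toSquareBlockProp q = M.toSquareBlockProp q := by
  ext x y
  have hx : a ≠ x := fun h => ha (h ▸ x.2)
  have hy : a ≠ y := fun h => ha (h ▸ y.2)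
  simp [toSquareBlockProp_def, edgePart, hx, hy]

lemma doubledTransition_sub_edgePart_apply [Fintype V] {G : SimpleGraph V} (hab : a ≠ b) :
    (doubledTransition G - edgePart (doubledTransition G) a b) x y =
      if (G.deleteEdges {s(a, b)}).Adj x y then doubledTransition G x y else 0 := by
  rw [sub_edgePart_apply _ hab]
  by_cases hxy : G.Adj x y
  · simp only [SimpleGraph.deleteEdges_adj, Set.mem_singleton_iff, hxy, true_and, ite_not]
  · simp [hxy, doubledTransition_apply]

end EdgePart

section Bipartite

lemma exists_sign_of_isBipartite {R : Type*} [Ring R] {H : SimpleGraph V} (hH : H.IsBipartite) :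
    ∃ s : V → R, (∀ x, s x * s x = 1) ∧ ∀ x y, H.Adj x y → s y = -s x := by
  obtain ⟨col⟩ := hH
  refine ⟨fun x => (-1) ^ (col x : ℕ), fun x => ?_, fun x y hxy => ?_⟩
  · exact (pow_add _ _ _).symm.trans (Even.add_self _).neg_one_pow
  · have hne := col.valid hxy
    dsimp only
    generalize col x = a at hne ⊢
    generalize col y = b at hne ⊢
    fin_cases a <;> fin_cases b <;> simp_all

lemma charpoly_sub_eq_charpoly_neg_add {R : Type*} [CommRing R] [Fintype V] [DecidableEq V]
    {M E : Matrix V V R} {s : V → R} (hs : ∀ x, s x * s x = 1)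
    (hM : ∀ x y, M x y ≠ 0 → s y = -s x) (hE : ∀ x y, E x y ≠ 0 → s y = s x) :
    (M - E).charpoly = (-(M + E)).charpoly := by
  rw [← charpoly_diagonal_conj hs]
  congr 1
  ext x y
  have hMxy : s x * M x y * s y = -M x y := by
    rcases eq_or_ne (M x y) 0 with h | h
    · simp [h]
    · rw [hM x y h]
      linear_combination -M x y * hs x
  have hExy : s x * E x y * s y = E x y := by
    rcases eq_or_ne (E x y) 0 with h | h
    · simp [h]
    · rw [hE x y h]
      linear_combination E x y * hs x
  simp only [mul_diagonal, diagonal_mul, Matrix.sub_apply, Matrix.neg_apply,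
    Matrix.add_apply]
  linear_combination hMxy - hExy

end Bipartite

lemma neg_one_eq_last (n : ℕ) : (-1 : Fin (n + 1)) = Fin.last n :=
  (eq_neg_of_add_eq_zero_left (Fin.last_add_one n)).symm

section Cycle

variable {G : SimpleGraph V} {n : ℕ} {c : Fin (n + 1) → V}

lemma adj_deleteEdges_castSucc_succ (hn : 2 ≤ n) (hc : Function.Injective c)
    (hadj : ∀ i, G.Adj (c i) (c (i + 1))) (i : Fin n) :
    (G.deleteEdges {s(c 0, c (-1))}).Adj (c i.castSucc) (c i.succ) := by
  rw [SimpleGraph.deleteEdges_adj, Set.mem_singleton_iff, Sym2.eq_iff, hc.eq_iff, hc.eq_iff,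
    hc.eq_iff, hc.eq_iff, neg_one_eq_last]
  refine ⟨by simpa using hadj i.castSucc, ?_⟩
  rintro (⟨hi, hi'⟩ | ⟨-, hi⟩)
  · simp only [Fin.ext_iff, Fin.val_castSucc, Fin.val_succ, Fin.val_last, Fin.val_zero] at hi hi'
    omega
  · exact i.succ_ne_zero hi

lemma reachable_deleteEdges (hn : 2 ≤ n) (hc : Function.Injective c)
    (hadj : ∀ i, G.Adj (c i) (c (i + 1))) (i : Fin (n + 1)) :
    (G.deleteEdges {s(c 0, c (-1))}).Reachable (c 0) (c i) := by
  induction i using Fin.induction with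
  | zero => exact .rfl
  | succ i ih => exact ih.trans (adj_deleteEdges_castSucc_succ hn hc hadj i).reachable

lemma isTree_deleteEdges [Fintype V] (hconn : G.Connected)
    (hcard : Fintype.card V = G.edgeFinset.card) {a b : V} (hab : G.Adj a b)
    (hreach : (G.deleteEdges {s(a, b)}).Reachable a b) : (G.deleteEdges {s(a, b)}).IsTree := by
  refine SimpleGraph.isTree_iff_connected_and_card.2 ⟨?_, ?_⟩
  · exact hconn.connected_delete_edge_of_not_isBridge fun hb => hb hreach
  · have hmem : s(a, b) ∈ G.edgeFinset := by simpa using hab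
    rw [Nat.card_eq_fintype_card (α := V), hcard, Nat.card_eq_fintype_card,
      ← SimpleGraph.edgeFinset_card, ← Finset.card_erase_add_one hmem]
    congr 2
    ext e
    simp [SimpleGraph.edgeSet_deleteEdges, and_comm]

lemma isBipartite_deleteEdges [Fintype V] (hconn : G.Connected)
    (hcard : Fintype.card V = G.edgeFinset.card) {k : ℕ} [NeZero k] (hk : 3 ≤ k) {c : ZMod k → V}
    (hc : Function.Injective c) (hadj : ∀ i, G.Adj (c i) (c (i + 1))) :
    (G.deleteEdges {s(c 0, c (-1))}).IsBipartite := by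
  have hlast : G.Adj (c 0) (c (-1)) := by simpa using (hadj (-1)).symm
  obtain ⟨n, rfl⟩ := Nat.exists_eq_add_one_of_ne_zero (NeZero.ne k)
  exact (isTree_deleteEdges hconn hcard hlast
    (reachable_deleteEdges (n := n) (by omega) hc hadj (-1))).isAcyclic.isBipartite

end Cycle

section HangingCycle

variable [Fintype V] {G : SimpleGraph V} {n : ℕ} {c : Fin (n + 1) → V} {v w : V}

/-- The vertices `c 0, …, c n` form, in this order, a cycle of `G` attached to the rest of the
graph only at `c 0`, whose neighbors off the cycle are `v` and `w`. The indices are taken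
modulo `n + 1`, so that `c (-1)` is the last vertex `c n`. -/
structure IsHangingCycle (G : SimpleGraph V) (c : Fin (n + 1) → V) (v w : V) : Prop where
  two_le : 2 ≤ n
  injective : Function.Injective c
  adj (i : Fin (n + 1)) : G.Adj (c i) (c (i + 1))
  degree_zero : G.degree (c 0) = 4
  degree_of_ne_zero (i : Fin (n + 1)) : i ≠ 0 → G.degree (c i) = 2
  adj_left : G.Adj (c 0) v
  adj_right : G.Adj (c 0) w
  left_notMem : v ∉ Set.range c
  right_notMem : w ∉ Set.range c
  left_ne_right : v ≠ w

namespace IsHangingCycle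

lemma neZero (h : IsHangingCycle G c v w) : NeZero n := ⟨by have := h.two_le; omega⟩

lemma adj_sub_one (h : IsHangingCycle G c v w) (i : Fin (n + 1)) : G.Adj (c i) (c (i - 1)) := by
  simpa using (h.adj (i - 1)).symm

lemma sub_one_ne_add_one (h : IsHangingCycle G c v w) (i : Fin (n + 1)) : i - 1 ≠ i + 1 := by
  obtain ⟨m, rfl⟩ := Nat.exists_eq_add_of_le' h.two_le
  rw [sub_eq_add_neg, Ne, add_right_inj, neg_eq_iff_add_eq_zero]
  simp [Fin.ext_iff, Fin.val_add, Nat.mod_eq_of_lt (show 2 < m + 2 + 1 by omega)]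

lemma one_ne_zero (h : IsHangingCycle G c v w) : (1 : Fin (n + 1)) ≠ 0 := by
  have := h.neZero
  simp

lemma neighborFinset_of_ne_zero (h : IsHangingCycle G c v w) {i : Fin (n + 1)} (hi : i ≠ 0) :
    G.neighborFinset (c i) = {c (i - 1), c (i + 1)} := by
  refine (Finset.eq_of_subset_of_card_le ?_ ?_).symm
  · simp [Finset.insert_subset_iff, h.adj, h.adj_sub_one]
  · rw [G.card_neighborFinset_eq_degree, h.degree_of_ne_zero i hi,
      Finset.card_pair (h.injective.ne (h.sub_one_ne_add_one i))]

lemma neighborFinset_zero (h : IsHangingCycle G c v w) :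
    G.neighborFinset (c 0) = {c (-1), c 1, v, w} := by
  have hv (i) : c i ≠ v := fun hi => h.left_notMem ⟨i, hi⟩
  have hw (i) : c i ≠ w := fun hi => h.right_notMem ⟨i, hi⟩
  have hne : c (-1) ≠ c 1 := h.injective.ne (by simpa using h.sub_one_ne_add_one 0)
  refine (Finset.eq_of_subset_of_card_le ?_ ?_).symm
  · simpa [Finset.insert_subset_iff, h.adj_left, h.adj_right] using
      And.intro (h.adj_sub_one 0) (h.adj 0)
  · rw [G.card_neighborFinset_eq_degree, h.degree_zero]
    simp [hv, hw, hne, h.left_ne_right]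

lemma adj_iff (h : IsHangingCycle G c v w) {i j : Fin (n + 1)} :
    G.Adj (c i) (c j) ↔ j = i - 1 ∨ j = i + 1 := by
  have hv : c j ≠ v := fun hj => h.left_notMem ⟨j, hj⟩
  have hw : c j ≠ w := fun hj => h.right_notMem ⟨j, hj⟩
  rw [← G.mem_neighborFinset]
  rcases eq_or_ne i 0 with rfl | hi
  · simp [h.neighborFinset_zero, h.injective.eq_iff, hv, hw]
  · simp [h.neighborFinset_of_ne_zero hi, h.injective.eq_iff]

lemma adj_iff_of_notMem (h : IsHangingCycle G c v w) {i : Fin (n + 1)} {y : V}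
    (hy : y ∉ Set.range c) : G.Adj (c i) y ↔ i = 0 ∧ (y = v ∨ y = w) := by
  have hc (j) : y ≠ c j := fun hj => hy ⟨j, hj.symm⟩
  rw [← G.mem_neighborFinset]
  rcases eq_or_ne i 0 with rfl | hi
  · simp [h.neighborFinset_zero, hc]
  · simp [h.neighborFinset_of_ne_zero hi, hc, hi]

lemma doubledTransition_of_adj (h : IsHangingCycle G c v w) {i : Fin (n + 1)} {y : V}
    (hy : G.Adj (c i) y) : doubledTransition G (c i) y = 1 - if i = 0 then 1 / 2 else 0 := by
  rw [doubledTransition_apply, if_pos hy]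
  split_ifs with hi
  · rw [hi, h.degree_zero]
    norm_num
  · rw [h.degree_of_ne_zero i hi]
    norm_num

lemma sum_doubledTransition_mul_on (h : IsHangingCycle G c v w) :
    ∑ i, ∑ j, doubledTransition G (c i) (c j) * doubledTransition G (c j) (c i) = 2 * n := by
  have hinner (i : Fin (n + 1)) :
      ∑ j, doubledTransition G (c i) (c j) * doubledTransition G (c j) (c i) =
        2 - (if i = 0 then 1 else 0) - (if i = 1 then 1 / 2 else 0) -
          (if i = -1 then 1 / 2 else 0) := by
    have hzero (j : Fin (n + 1)) (hj : j ≠ i - 1 ∧ j ≠ i + 1) :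
        doubledTransition G (c i) (c j) * doubledTransition G (c j) (c i) = 0 := by
      rw [doubledTransition_apply, if_neg (by rwa [h.adj_iff, not_or]), zero_mul]
    rw [Fintype.sum_eq_add _ _ (h.sub_one_ne_add_one i) hzero,
      h.doubledTransition_of_adj (h.adj i), h.doubledTransition_of_adj (h.adj i).symm,
      h.doubledTransition_of_adj (h.adj_sub_one i),
      h.doubledTransition_of_adj (h.adj_sub_one i).symm]
    rcases eq_or_ne i 0 with rfl | hi
    · simp only [↓reduceIte, one_div, zero_sub, neg_eq_zero, h.one_ne_zero, sub_zero, mul_one,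
        zero_add, h.one_ne_zero.symm, zero_eq_neg]
      norm_num
    · simp only [hi, ↓reduceIte, sub_zero, sub_eq_zero, one_div, one_mul, add_eq_zero_iff_eq_neg]
      ring
  simp only [hinner, Finset.sum_sub_distrib, Finset.sum_ite_eq', Finset.mem_univ, if_true,
    Finset.sum_const, Finset.card_univ, Fintype.card_fin, nsmul_eq_mul, Nat.cast_add,
    Nat.cast_one]
  ring

lemma sum_doubledTransition_mul_off (h : IsHangingCycle G c v w) :
    ∑ i, ∑ y : {y // y ∉ Set.range c}, doubledTransition G (c i) y * doubledTransition G y (c i) =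
      1 / (G.degree v : ℂ) + 1 / (G.degree w : ℂ) := by
  have hzero (i) (y : {y // y ∉ Set.range c}) (hy : ¬ (i = 0 ∧ (y.1 = v ∨ y.1 = w))) :
      doubledTransition G (c i) y * doubledTransition G y (c i) = 0 := by
    rw [doubledTransition_apply, if_neg (by rwa [h.adj_iff_of_notMem y.2]), zero_mul]
  have hedge {y : V} (hy : G.Adj (c 0) y) :
      doubledTransition G (c 0) y * doubledTransition G y (c 0) = 1 / (G.degree y : ℂ) := by
    rw [h.doubledTransition_of_adj hy, doubledTransition_apply, if_pos hy.symm, if_pos rfl]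
    ring
  rw [Fintype.sum_eq_single 0 fun i hi => Finset.sum_eq_zero fun y _ => hzero i y (hi ·.1),
    Fintype.sum_eq_add ⟨v, h.left_notMem⟩ ⟨w, h.right_notMem⟩
      (Subtype.coe_ne_coe.1 h.left_ne_right) fun y hy => hzero 0 y ?_,
    hedge h.adj_left, hedge h.adj_right]
  rintro ⟨-, hy' | hy'⟩
  · exact hy.1 (Subtype.ext hy')
  · exact hy.2 (Subtype.ext hy')

lemma trace_doubledTransition_sq (h : IsHangingCycle G c v w) :
    (doubledTransition G * doubledTransition G).trace =
      ((doubledTransition G).toSquareBlockProp (· ∉ Set.range c) *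
        (doubledTransition G).toSquareBlockProp (· ∉ Set.range c)).trace +
      2 * n + 2 * (1 / (G.degree v : ℂ) + 1 / (G.degree w : ℂ)) := by
  rw [trace_mul_self_eq_add_of_injective _ h.injective, h.sum_doubledTransition_mul_on,
    h.sum_doubledTransition_mul_off]

lemma adj_castSucc_succ (h : IsHangingCycle G c v w) (i : Fin n) :
    G.Adj (c i.castSucc) (c i.succ) := by
  simpa using h.adj i.castSucc

lemma adj_zero_neg_one (h : IsHangingCycle G c v w) : G.Adj (c 0) (c (-1)) := by
  simpa using h.adj_sub_one 0

lemma adj_deleteEdges (h : IsHangingCycle G c v w) (i : Fin n) :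
    (G.deleteEdges {s(c 0, c (-1))}).Adj (c i.castSucc) (c i.succ) :=
  adj_deleteEdges_castSucc_succ h.two_le h.injective h.adj i

lemma exists_le_eq_of_adj_deleteEdges (h : IsHangingCycle G c v w) (i : Fin n) {x : V}
    (hx : (G.deleteEdges {s(c 0, c (-1))}).Adj (c i.succ) x) :
    ∃ j ≥ i.castSucc, x = c j := by
  rw [SimpleGraph.deleteEdges_adj, Set.mem_singleton_iff] at hx
  obtain ⟨hadj, hdel⟩ := hx
  rw [← G.mem_neighborFinset, h.neighborFinset_of_ne_zero i.succ_ne_zero, Finset.mem_insert,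
    Finset.mem_singleton] at hadj
  rcases hadj with rfl | rfl
  · exact ⟨i.castSucc, le_rfl, by rw [← Fin.coeSucc_eq_succ, add_sub_cancel_right]⟩
  · have hlast : i.succ ≠ Fin.last n := by
      intro hi
      rw [hi, Fin.last_add_one, ← neg_one_eq_last] at hdel
      exact hdel Sym2.eq_swap
    have hlt := Fin.lt_add_one_iff.2 (Fin.lt_last_iff_ne_last.2 hlast)
    exact ⟨_, i.castSucc_lt_succ.le.trans hlt.le, rfl⟩

lemma prod_doubledTransition_succ_castSucc (h : IsHangingCycle G c v w) :
    ∏ i : Fin n, doubledTransition G (c i.succ) (c i.castSucc) = 1 := by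
  refine Finset.prod_eq_one fun i _ => ?_
  rw [h.doubledTransition_of_adj (h.adj_castSucc_succ i).symm, if_neg i.succ_ne_zero, sub_zero]

lemma prod_doubledTransition_castSucc_succ (h : IsHangingCycle G c v w) :
    ∏ i : Fin n, doubledTransition G (c i.castSucc) (c i.succ) = 1 / 2 := by
  have := h.neZero
  rw [Fintype.prod_eq_single 0, h.doubledTransition_of_adj (h.adj_castSucc_succ 0),
    if_pos Fin.castSucc_zero']
  · norm_num
  · intro i hi
    rw [h.doubledTransition_of_adj (h.adj_castSucc_succ i),
      if_neg (Fin.castSucc_ne_zero_iff.2 hi), sub_zero]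

lemma charpoly_sub_edgePart_sub_edgePart (h : IsHangingCycle G c v w) (hn : Even n)
    (hbip : (G.deleteEdges {s(c 0, c (-1))}).IsBipartite) {E : Matrix V V ℂ}
    (hE : E = edgePart (doubledTransition G) (c 0) (c (-1))) :
    (doubledTransition G - E - E).charpoly = (-doubledTransition G).charpoly := by
  obtain ⟨s, hs, hsign⟩ := exists_sign_of_isBipartite (R := ℂ) hbip
  have hspath (i : Fin (n + 1)) : s (c i) = (-1) ^ (i : ℕ) * s (c 0) := by
    induction i using Fin.induction with
    | zero => simp
    | succ i ih =>
      rw [hsign _ _ (h.adj_deleteEdges i), ih, Fin.val_succ, Fin.val_castSucc, pow_succ]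
      ring
  have hslast : s (c (-1)) = s (c 0) := by
    rw [hspath, neg_one_eq_last, Fin.val_last, hn.neg_one_pow, one_mul]
  have hsT (x y : V) (hxy : (doubledTransition G - E) x y ≠ 0) : s y = -s x := by
    rw [hE, doubledTransition_sub_edgePart_apply h.adj_zero_neg_one.ne, ite_ne_right_iff] at hxy
    exact hsign x y hxy.1
  have hsE (x y : V) (hxy : E x y ≠ 0) : s y = s x := by
    rw [hE] at hxy
    rcases Sym2.eq_iff.1 (mk_eq_mk_of_edgePart_ne_zero _ hxy) with ⟨rfl, rfl⟩ | ⟨rfl, rfl⟩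
    · exact hslast
    · exact hslast.symm
  rw [charpoly_sub_eq_charpoly_neg_add hs hsT hsE, sub_add_cancel]

lemma charpoly_neg_sub_charpoly (h : IsHangingCycle G c v w) (hn : Even n)
    (hbip : (G.deleteEdges {s(c 0, c (-1))}).IsBipartite) :
    (-doubledTransition G).charpoly - (doubledTransition G).charpoly =
      C 2 * ((doubledTransition G).toSquareBlockProp (· ∉ Set.range c)).charpoly := by
  have := h.neZero
  obtain ⟨E, hE⟩ : ∃ E, E = edgePart (doubledTransition G) (c 0) (c (-1)) := ⟨_, rfl⟩
  have hTE (x y : V) : (doubledTransition G - E) x y =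
      if (G.deleteEdges {s(c 0, c (-1))}).Adj x y then doubledTransition G x y else 0 := by
    rw [hE, doubledTransition_sub_edgePart_apply h.adj_zero_neg_one.ne]
  have hsupp {x y : V} (hxy : (doubledTransition G - E) x y ≠ 0) :
      (G.deleteEdges {s(c 0, c (-1))}).Adj x y := by
    rw [hTE, ite_ne_right_iff] at hxy
    exact hxy.1
  have hdiff := charpoly_sub_sub_charpoly_add (doubledTransition G - E) h.injective
    (fun i x hx => h.exists_le_eq_of_adj_deleteEdges i (hsupp hx))
    (fun i x hx => h.exists_le_eq_of_adj_deleteEdges i (hsupp hx).symm) (neg_one_eq_last n ▸ hE)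
  have hblock : (doubledTransition G - E).toSquareBlockProp (· ∉ Set.range c) =
      (doubledTransition G).toSquareBlockProp (· ∉ Set.range c) := by
    rw [hE]
    exact toSquareBlockProp_sub_edgePart _ _ (not_not.2 ⟨0, rfl⟩)
  have hforward (i : Fin n) : (doubledTransition G - E) (c i.castSucc) (c i.succ) =
      doubledTransition G (c i.castSucc) (c i.succ) := by
    rw [hTE, if_pos (h.adj_deleteEdges i)]
  have hbackward (i : Fin n) : (doubledTransition G - E) (c i.succ) (c i.castSucc) =
      doubledTransition G (c i.succ) (c i.castSucc) := by
    rw [hTE, if_pos (h.adj_deleteEdges i).symm]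
  simp only [hforward, hbackward, h.prod_doubledTransition_castSucc_succ,
    h.prod_doubledTransition_succ_castSucc] at hdiff
  rw [h.charpoly_sub_edgePart_sub_edgePart hn hbip hE, sub_add_cancel, hblock, ← neg_one_eq_last,
    h.doubledTransition_of_adj h.adj_zero_neg_one,
    h.doubledTransition_of_adj h.adj_zero_neg_one.symm, if_pos rfl,
    if_neg (neg_ne_zero.2 h.one_ne_zero)] at hdiff
  rw [hdiff]
  norm_num

lemma isIntegral_charpoly_coeff_compl (h : IsHangingCycle G c v w) (hn : Even n)
    (hbip : (G.deleteEdges {s(c 0, c (-1))}).IsBipartite) (hper : IsPeriodic G) (i : ℕ) :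
    IsIntegral ℤ
      (((doubledTransition G).toSquareBlockProp (· ∉ Set.range c)).charpoly.coeff i) := by
  have hint := isIntegral_charpoly_coeff (doubledTransition G)
    (fun _ => isIntegral_of_mem_spectrum_doubledTransition hper) i
  have hcoeff := congr_arg (coeff · i) (h.charpoly_neg_sub_charpoly hn hbip)
  simp only [coeff_sub, charpoly_neg_coeff, coeff_C_mul] at hcoeff
  rcases neg_one_pow_eq_or ℂ (Fintype.card V + i) with hsign | hsign
  · rw [hsign, one_mul, sub_self, zero_eq_mul] at hcoeff
    rw [hcoeff.resolve_left two_ne_zero]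
    exact isIntegral_zero
  · rw [hsign] at hcoeff
    rw [show coeff _ i = -(doubledTransition G).charpoly.coeff i by linear_combination -hcoeff / 2]
    exact hint.neg

lemma two_le_card_compl (h : IsHangingCycle G c v w) :
    2 ≤ Fintype.card {y // y ∉ Set.range c} :=
  Fintype.one_lt_card_iff.2
    ⟨⟨v, h.left_notMem⟩, ⟨w, h.right_notMem⟩, Subtype.coe_ne_coe.1 h.left_ne_right⟩

lemma inv_degree_add_inv_degree (h : IsHangingCycle G c v w) :
    1 / (G.degree v : ℂ) + 1 / (G.degree w : ℂ) =
      ((doubledTransition G).toSquareBlockProp (· ∉ Set.range c)).charpoly.coeff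
          (Fintype.card {y // y ∉ Set.range c} - 2) -
        (doubledTransition G).charpoly.coeff (Fintype.card V - 2) - n := by
  have hdiag (y : V) : doubledTransition G y y = 0 := by simp [doubledTransition_apply]
  have htrace : (doubledTransition G).trace = 0 := by simp [trace, hdiag]
  have htrace' : ((doubledTransition G).toSquareBlockProp (· ∉ Set.range c)).trace = 0 := by
    simp [trace, toSquareBlockProp_def, hdiag]
  have hP := two_mul_charpoly_coeff_card_sub_two (doubledTransition G)
    (h.two_le_card_compl.trans (Fintype.card_subtype_le _))
  have hQ := two_mul_charpoly_coeff_card_sub_two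
    ((doubledTransition G).toSquareBlockProp (· ∉ Set.range c)) h.two_le_card_compl
  rw [htrace, h.trace_doubledTransition_sq] at hP
  rw [htrace'] at hQ
  linear_combination (hP - hQ) / 2

lemma isIntegral_inv_degree_add_inv_degree (h : IsHangingCycle G c v w) (hn : Even n)
    (hbip : (G.deleteEdges {s(c 0, c (-1))}).IsBipartite) (hper : IsPeriodic G) :
    IsIntegral ℤ (1 / (G.degree v : ℂ) + 1 / (G.degree w : ℂ)) := by
  have hcompl := h.isIntegral_charpoly_coeff_compl hn hbip hper
  have hwhole := isIntegral_charpoly_coeff (doubledTransition G)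
    fun _ => isIntegral_of_mem_spectrum_doubledTransition hper
  have hlength : IsIntegral ℤ (n : ℂ) := isIntegral_algebraMap (x := (n : ℤ))
  rw [h.inv_degree_add_inv_degree]
  exact ((hcompl _).sub (hwhole _)).sub hlength

end IsHangingCycle

end HangingCycle

lemma eq_and_eq_one_or_eq_two_of_isIntegral {K : Type*} [Field K] [CharZero K] {a b : ℕ}
    (ha : a ≠ 0) (hb : b ≠ 0) (h : IsIntegral ℤ (1 / (a : K) + 1 / (b : K))) :
    a = b ∧ (a = 1 ∨ a = 2) := by
  have hq : IsIntegral ℤ (1 / (a : ℚ) + 1 / (b : ℚ)) := by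
    rw [← isIntegral_algebraMap_iff (algebraMap ℚ K).injective]
    simpa using h
  obtain ⟨z, hz⟩ := IsIntegrallyClosed.isIntegral_iff.1 hq
  have hzab : z * (a * b) = (a : ℤ) + b := by
    have hzab' : (z : ℚ) * (a * b) = a + b := by
      rw [← eq_intCast (algebraMap ℤ ℚ), hz]
      field_simp
      ring
    exact_mod_cast hzab'
  have hab : a ∣ b := Int.natCast_dvd_natCast.1 ⟨z * b - 1, by linear_combination -hzab⟩
  have hba : b ∣ a := Int.natCast_dvd_natCast.1 ⟨z * a - 1, by linear_combination -hzab⟩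
  obtain rfl := Nat.dvd_antisymm hab hba
  have hza : z * a = 2 :=
    mul_right_cancel₀ (Nat.cast_ne_zero.2 ha) (by linear_combination hzab)
  have hdvd : a ∣ 2 := Int.natCast_dvd_natCast.1 ⟨z, by rw [mul_comm, hza]; rfl⟩
  exact ⟨rfl, (Nat.dvd_prime Nat.prime_two).1 hdvd⟩

theorem degree_firstNeighbors_general {V : Type*} [Fintype V] (G : SimpleGraph V)
    (k : ℕ) [NeZero k] (hk3 : 3 ≤ k) (hkodd : Odd k)
    (c : ZMod k → V) (hcinj : Function.Injective c)
    (hcadj : ∀ i : ZMod k, G.Adj (c i) (c (i + 1)))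
    (hbip : (G.deleteEdges {s(c 0, c (-1))}).IsBipartite)
    (hdegu : G.degree (c 0) = 4) (hdegc : ∀ i : ZMod k, i ≠ 0 → G.degree (c i) = 2)
    (v1 w1 : V) (hv1 : G.Adj (c 0) v1) (hw1 : G.Adj (c 0) w1)
    (hv1c : v1 ∉ Set.range c) (hw1c : w1 ∉ Set.range c) (hvw : v1 ≠ w1)
    (hper : IsPeriodic G) :
    G.degree v1 = G.degree w1 ∧ (G.degree v1 = 1 ∨ G.degree v1 = 2) := by
  obtain ⟨n, rfl⟩ := Nat.exists_eq_add_one_of_ne_zero (NeZero.ne k)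
  have hcycle : IsHangingCycle (n := n) G c v1 w1 :=
    ⟨by omega, hcinj, hcadj, hdegu, hdegc, hv1, hw1, hv1c, hw1c, hvw⟩
  have hn : Even n := by grind
  have hint := hcycle.isIntegral_inv_degree_add_inv_degree hn hbip hper
  exact eq_and_eq_one_or_eq_two_of_isIntegral hv1.symm.degree_pos_left.ne'
    hw1.symm.degree_pos_left.ne' hint

/-- In the cycle-plus-tree setting, let `v₁` and `w₁` be the two neighbors
of `u = c 0` off the cycle. If `G` is periodic, then `deg v₁ = deg w₁` and this common
degree is `1` or `2`. -/
theorem degree_firstNeighbors {V : Type*} [Fintype V] [DecidableEq V] (G : SimpleGraph V)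
    (hconn : G.Connected) (k : ℕ) [NeZero k] (hk3 : 3 ≤ k) (hkodd : Odd k)
    (c : ZMod k → V) (hcinj : Function.Injective c)
    (hcadj : ∀ i : ZMod k, G.Adj (c i) (c (i + 1)))
    (hcard : Fintype.card V = G.edgeFinset.card)
    (hdegu : G.degree (c 0) = 4) (hdegc : ∀ i : ZMod k, i ≠ 0 → G.degree (c i) = 2)
    (v1 w1 : V) (hv1 : G.Adj (c 0) v1) (hw1 : G.Adj (c 0) w1)
    (hv1c : v1 ∉ Set.range c) (hw1c : w1 ∉ Set.range c) (hvw : v1 ≠ w1)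
    (hper : IsPeriodic G) :
    G.degree v1 = G.degree w1 ∧ (G.degree v1 = 1 ∨ G.degree v1 = 2) := by
  exact degree_firstNeighbors_general G k hk3 hkodd c hcinj hcadj
    (isBipartite_deleteEdges hconn (by convert hcard) hk3 hcinj hcadj) hdegu hdegc v1 w1 hv1 hw1
    hv1c hw1c hvw hper

end GroverPaper
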